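/- (Two-sided concentration of the empirical expansion ratio for a fixed set.) In the setting of the fixed-set concentration lemma (A, B, U ⊆ X with P(A), P(B) > 0; deterministic n : X → X with n(x) ∈ B for x ∈ A; p = P({x : n(x) ∈ U} | A), q = P(U | B) ≥ q̄ > 0; i.i.d. samples x_1,…,x_{n_A} ∼ P(·|A) and z_1,…,z_{n_B} ∼ P(·|B), mutually independent; empirical frequencies p̂ = (1/n_A)·Σ_i 1[n(x_i) ∈ U] and q̂ = (1/n_B)·Σ_j 1[z_j ∈ U]; γ = n_B·q̄/n_A), for any δ ∈ (0,1] the probability that |p/q − p̂/q̂| > δ is at most 4·exp( −n_A·δ² · γ·q̄² / (4 + √γ)² ). -/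

import Mathlib

open Finset
open scoped Classical

noncomputable section

variable {X : Type*} [Fintype X] [DecidableEq X]

/-- Probability of a finite set of points under the weight function `μ`. -/
def Pw (μ : X → ℝ) (A : Finset X) : ℝ := ∑ x ∈ A, μ x

/-- Conditional probability `P(A | B) = P(A ∩ B) / P(B)`. -/
def cPw (μ : X → ℝ) (A B : Finset X) : ℝ := Pw μ (A ∩ B) / Pw μ B

/-- The conditional point mass function of `P(· | A)`. -/
def condPMF (μ : X → ℝ) (A : Finset X) (x : X) : ℝ :=
  (if x ∈ A then μ x else 0) / Pw μ A

/-- The probability that an i.i.d. sample from `P(· | A)` equals the tuple `xs`. -/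
def prodW (μ : X → ℝ) (A : Finset X) {n : ℕ} (xs : Fin n → X) : ℝ :=
  ∏ j, condPMF μ A (xs j)

/-- Probability of an event `E` of two mutually independent i.i.d. samples,
of sizes `nA` from `P(· | A)` and `nB` from `P(· | B)`. -/
def samplePr (μ : X → ℝ) (A B : Finset X) (nA nB : ℕ)
    (E : (Fin nA → X) → (Fin nB → X) → Prop) : ℝ :=
  ∑ xs : Fin nA → X, ∑ zs : Fin nB → X,
    prodW μ A xs * prodW μ B zs * (if E xs zs then 1 else 0)

/-- Probability of an event of two i.i.d. samples together with an independent
ghost copy of each. -/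
def samplePr4 (μ : X → ℝ) (A B : Finset X) (nA nB : ℕ)
    (E : (Fin nA → X) → (Fin nB → X) → (Fin nA → X) → (Fin nB → X) → Prop) : ℝ :=
  ∑ xs : Fin nA → X, ∑ zs : Fin nB → X, ∑ xs' : Fin nA → X, ∑ zs' : Fin nB → X,
    prodW μ A xs * prodW μ B zs * prodW μ A xs' * prodW μ B zs' *
      (if E xs zs xs' zs' then 1 else 0)

/-- Empirical frequency `(1/n)·Σ_j 1[g(x_j) ∈ U]` of a sample `xs`. -/
def empFreq (U : Finset X) (g : X → X) {n : ℕ} (xs : Fin n → X) : ℝ :=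
  (∑ j, if g (xs j) ∈ U then (1 : ℝ) else 0) / n

/-- The empirical expansion ratio `ĉ(U) = p̂(U)/q̂(U)` of a pair of samples. -/
def empRatio (U : Finset X) (g : X → X) {nA nB : ℕ}
    (xs : Fin nA → X) (zs : Fin nB → X) : ℝ :=
  empFreq U g xs / empFreq U id zs

/-!
If `p̂ = p ± t` and `q̂ = (1 ± ε) q`, then `p̂ / q̂` is within `(t + ε) / ((1 - ε) q)` of `p / q`.
The additive error is controlled by Hoeffding's inequality, with exponent `2 nA t²`, and the
relative error by a multiplicative Chernoff bound, with exponent `nB q ε² / 4`. The budget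
`t + 2 ε = δ q̄` is split in the proportion `t : 2 ε = √γ : 4`, which equalizes `nA t²` and
`nB q̄ ε² / 4`.
-/

section BernoulliMGF

open ProbabilityTheory in
lemma bernoulli_mgf_le_exp_add_sq_div_eight {p : ℝ} (hp0 : 0 ≤ p) (hp1 : p ≤ 1) (s : ℝ) :
    1 + p * (Real.exp s - 1) ≤ Real.exp (p * s + s ^ 2 / 8) := by
  let ν := bernoulliMeasure (1 : ℝ) 0 ⟨p, hp0, hp1⟩
  have mem_Icc : ∀ᵐ x ∂ν, id x ∈ Set.Icc (0 : ℝ) 1 := by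
    simp [ν, bernoulliMeasure_def, MeasureTheory.ae_add_measure_iff,
      MeasureTheory.Measure.ae_smul_measure]
  have hoeffding := (hasSubgaussianMGF_of_mem_Icc measurable_id.aemeasurable mem_Icc).mgf_le s
  have centered_mgf_le :
      p * Real.exp (s * (1 - p)) + (1 - p) * Real.exp (s * (0 - p)) ≤ Real.exp (s ^ 2 / 8) := by
    convert hoeffding using 2
    · simp [mgf, ν, integral_bernoulliMeasure]
    · norm_num
      ring
  calc 1 + p * (Real.exp s - 1)
      = Real.exp (p * s) * (p * Real.exp (s * (1 - p)) + (1 - p) * Real.exp (s * (0 - p))) := by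
        have shift_one : Real.exp (p * s) * Real.exp (s * (1 - p)) = Real.exp s := by
          rw [← Real.exp_add]
          ring_nf
        have shift_zero : Real.exp (p * s) * Real.exp (s * (0 - p)) = 1 := by
          rw [← Real.exp_add, ← Real.exp_zero]
          ring_nf
        linear_combination -p * shift_one - (1 - p) * shift_zero
    _ ≤ Real.exp (p * s) * Real.exp (s ^ 2 / 8) := by gcongr
    _ = Real.exp (p * s + s ^ 2 / 8) := (Real.exp_add _ _).symm

lemma bernoulli_mgf_le_exp_mul_add_sq {q s : ℝ} (hq : 0 ≤ q) (hs : |s| ≤ 1) :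
    1 + q * (Real.exp s - 1) ≤ Real.exp (q * s + q * s ^ 2) := by
  have exp_sub_one_le : Real.exp s - 1 ≤ s + s ^ 2 := by
    linarith [(abs_le.1 (Real.abs_exp_sub_one_sub_id_le hs)).2]
  calc 1 + q * (Real.exp s - 1) ≤ q * s + q * s ^ 2 + 1 := by
        linarith [mul_le_mul_of_nonneg_left exp_sub_one_le hq]
    _ ≤ Real.exp (q * s + q * s ^ 2) := Real.add_one_le_exp _

end BernoulliMGF

lemma abs_div_sub_div_le {K : Type*} [Field K] [LinearOrder K] [IsStrictOrderedRing K]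
    {p q p' q' t ε δ : K} (hp : |p| ≤ 1) (hq : 0 < q) (hε : ε < 1)
    (hδ : t + ε ≤ δ * ((1 - ε) * q)) (hp' : |p' - p| ≤ t) (hq' : |q' - q| ≤ ε * q) :
    |p / q - p' / q'| ≤ δ := by
  have ε_nonneg : 0 ≤ ε := nonneg_of_mul_nonneg_left ((abs_nonneg _).trans hq') hq
  have den_pos : 0 < (1 - ε) * q := mul_pos (sub_pos.2 hε) hq
  have den_le : (1 - ε) * q ≤ q' := by linarith [(abs_le.1 hq').1]
  have q'_pos : 0 < q' := den_pos.trans_le den_le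
  calc |p / q - p' / q'| = |p * (q' - q) - q * (p' - p)| / (q * q') := by
        rw [div_sub_div _ _ hq.ne' q'_pos.ne', abs_div, abs_of_pos (mul_pos hq q'_pos)]
        ring_nf
    _ ≤ (1 * (ε * q) + q * t) / (q * q') := by
        gcongr
        refine (abs_sub _ _).trans ?_
        rw [abs_mul, abs_mul, abs_of_pos hq]
        gcongr
    _ = (t + ε) / q' := by field_simp; ring
    _ ≤ (t + ε) / ((1 - ε) * q) := by
        gcongr
        exact add_nonneg ((abs_nonneg _).trans hp') ε_nonneg
    _ ≤ δ := (div_le_iff₀ den_pos).2 hδ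

section ConditionalProbability

variable {μ : X → ℝ} {A B : Finset X}

omit [Fintype X] in
lemma cPw_nonneg (hμ : ∀ x, 0 ≤ μ x) : 0 ≤ cPw μ A B :=
  div_nonneg (sum_nonneg fun x _ => hμ x) (sum_nonneg fun x _ => hμ x)

omit [Fintype X] in
lemma cPw_le_one (hμ : ∀ x, 0 ≤ μ x) : cPw μ A B ≤ 1 :=
  div_le_one_of_le₀ (sum_le_sum_of_subset_of_nonneg inter_subset_right fun x _ _ => hμ x)
    (sum_nonneg fun x _ => hμ x)

omit [Fintype X] in
lemma condPMF_nonneg (hμ : ∀ x, 0 ≤ μ x) (x : X) : 0 ≤ condPMF μ A x :=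
  div_nonneg (by split_ifs <;> simp [hμ]) (sum_nonneg fun x _ => hμ x)

lemma sum_condPMF (hA : Pw μ A ≠ 0) : ∑ x, condPMF μ A x = 1 := by
  simp only [condPMF, ← sum_div, sum_ite_mem, univ_inter]
  exact div_self hA

lemma sum_condPMF_mul_indicator (μ : X → ℝ) (A V : Finset X) :
    ∑ x, condPMF μ A x * (if x ∈ V then 1 else 0) = cPw μ V A := by
  simp only [condPMF, cPw, Pw, mul_ite, mul_one, mul_zero, sum_ite_mem, univ_inter, ← sum_div]

lemma sum_condPMF_mul_exp_indicator (hA : Pw μ A ≠ 0) (U : Finset X) (g : X → X) (s : ℝ) :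
    ∑ x, condPMF μ A x * Real.exp (s * if g x ∈ U then 1 else 0) =
      1 + cPw μ (univ.filter fun x => g x ∈ U) A * (Real.exp s - 1) := by
  have exp_indicator (x : X) : Real.exp (s * if g x ∈ U then 1 else 0) =
      1 + (if x ∈ univ.filter fun x => g x ∈ U then 1 else 0) * (Real.exp s - 1) := by
    by_cases hx : g x ∈ U <;> simp [hx]
  simp only [exp_indicator, mul_add, mul_one, ← mul_assoc, sum_add_distrib, ← sum_mul,
    sum_condPMF hA, sum_condPMF_mul_indicator]

end ConditionalProbability

section IIDSample

variable {μ : X → ℝ} {A B U : Finset X} {g : X → X} {n nA nB : ℕ}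

omit [Fintype X] in
lemma prodW_nonneg (hμ : ∀ x, 0 ≤ μ x) (xs : Fin n → X) : 0 ≤ prodW μ A xs :=
  prod_nonneg fun _ _ => condPMF_nonneg hμ _

lemma sum_prodW_mul_prod (μ : X → ℝ) (A : Finset X) (n : ℕ) (f : X → ℝ) :
    ∑ xs : Fin n → X, prodW μ A xs * ∏ j, f (xs j) = (∑ x, condPMF μ A x * f x) ^ n := by
  simp only [prodW, ← prod_mul_distrib, Fintype.sum_pow]

lemma sum_prodW (hA : Pw μ A ≠ 0) (n : ℕ) : ∑ xs : Fin n → X, prodW μ A xs = 1 := by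
  simpa [sum_condPMF hA] using sum_prodW_mul_prod μ A n 1

omit [Fintype X] in
lemma natCast_mul_empFreq (hn : n ≠ 0) (xs : Fin n → X) :
    n * empFreq U g xs = ∑ j, if g (xs j) ∈ U then (1 : ℝ) else 0 :=
  mul_div_cancel₀ _ (Nat.cast_ne_zero.2 hn)

lemma sum_prodW_mul_exp_empFreq (hA : Pw μ A ≠ 0) (hn : n ≠ 0) (s : ℝ) :
    ∑ xs : Fin n → X, prodW μ A xs * Real.exp (s * (n * empFreq U g xs)) =
      (1 + cPw μ (univ.filter fun x => g x ∈ U) A * (Real.exp s - 1)) ^ n := by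
  simp only [natCast_mul_empFreq hn, mul_sum, Real.exp_sum]
  rw [sum_prodW_mul_prod μ A n fun x => Real.exp (s * if g x ∈ U then 1 else 0),
    sum_condPMF_mul_exp_indicator hA]

/-- Probability of an event `E` of an i.i.d. sample of size `n` from `P(· | A)`: the one-sample
counterpart of `samplePr`, in which the deviations of `p̂` and `q̂` are bounded separately. -/
def iidPr (μ : X → ℝ) (A : Finset X) (n : ℕ) (E : (Fin n → X) → Prop) : ℝ :=
  ∑ xs : Fin n → X, prodW μ A xs * (if E xs then 1 else 0)

lemma indicator_le_add_indicator {P Q R : Prop} (h : P → Q ∨ R) :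
    (if P then (1 : ℝ) else 0) ≤ (if Q then 1 else 0) + (if R then 1 else 0) := by
  split_ifs <;> simp_all

lemma iidPr_le_add_iidPr (hμ : ∀ x, 0 ≤ μ x) {E F G : (Fin n → X) → Prop}
    (h : ∀ xs, E xs → F xs ∨ G xs) :
    iidPr μ A n E ≤ iidPr μ A n F + iidPr μ A n G := by
  simp only [iidPr, ← sum_add_distrib, ← mul_add]
  gcongr with xs
  · exact prodW_nonneg hμ xs
  · exact indicator_le_add_indicator (h xs)

lemma samplePr_le_iidPr_add_iidPr (hμ : ∀ x, 0 ≤ μ x) (hA : Pw μ A ≠ 0) (hB : Pw μ B ≠ 0)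
    {E : (Fin nA → X) → (Fin nB → X) → Prop}
    {F : (Fin nA → X) → Prop} {G : (Fin nB → X) → Prop} (h : ∀ xs zs, E xs zs → F xs ∨ G zs) :
    samplePr μ A B nA nB E ≤ iidPr μ A nA F + iidPr μ B nB G :=
  calc samplePr μ A B nA nB E
      ≤ ∑ xs : Fin nA → X, ∑ zs : Fin nB → X, prodW μ A xs * prodW μ B zs *
          ((if F xs then 1 else 0) + (if G zs then 1 else 0)) := by
        unfold samplePr
        gcongr with xs _ zs
        · exact mul_nonneg (prodW_nonneg hμ xs) (prodW_nonneg hμ zs)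
        · exact indicator_le_add_indicator (h xs zs)
    _ = iidPr μ A nA F * (∑ zs : Fin nB → X, prodW μ B zs) +
          (∑ xs : Fin nA → X, prodW μ A xs) * iidPr μ B nB G := by
        simp only [iidPr, sum_mul_sum, ← sum_add_distrib]
        refine sum_congr rfl fun xs _ => sum_congr rfl fun zs _ => by ring
    _ = iidPr μ A nA F + iidPr μ B nB G := by
        rw [sum_prodW hA, sum_prodW hB, mul_one, one_mul]

end IIDSample

section TailBounds

variable {μ : X → ℝ} {A B U : Finset X} {g : X → X} {n nA nB : ℕ}

lemma iidPr_le_mul_empFreq_sub_le (hμ : ∀ x, 0 ≤ μ x) (hA : Pw μ A ≠ 0) (hn : n ≠ 0)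
    {p s c : ℝ} (hp : cPw μ (univ.filter fun x => g x ∈ U) A = p)
    (hmgf : 1 + p * (Real.exp s - 1) ≤ Real.exp (p * s + c)) (u : ℝ) :
    iidPr μ A n (fun xs => u ≤ s * (empFreq U g xs - p)) ≤ Real.exp (n * (c - u)) := by
  have mgf_nonneg : 0 ≤ 1 + p * (Real.exp s - 1) := by
    have p_nonneg : 0 ≤ p := hp ▸ cPw_nonneg hμ
    have p_le_one : p ≤ 1 := hp ▸ cPw_le_one hμ
    nlinarith [Real.exp_pos s]
  have markov (xs : Fin n → X) : (if u ≤ s * (empFreq U g xs - p) then (1 : ℝ) else 0) ≤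
      Real.exp (s * (n * empFreq U g xs)) * Real.exp (-(n * (p * s + u))) := by
    split_ifs with h
    · rw [← Real.exp_add, Real.one_le_exp_iff]
      linarith [mul_le_mul_of_nonneg_left h n.cast_nonneg]
    · positivity
  calc iidPr μ A n (fun xs => u ≤ s * (empFreq U g xs - p))
      ≤ ∑ xs : Fin n → X, prodW μ A xs *
          (Real.exp (s * (n * empFreq U g xs)) * Real.exp (-(n * (p * s + u)))) :=
        sum_le_sum fun xs _ => mul_le_mul_of_nonneg_left (markov xs) (prodW_nonneg hμ xs)
    _ = (1 + p * (Real.exp s - 1)) ^ n * Real.exp (-(n * (p * s + u))) := by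
        rw [← hp, ← sum_prodW_mul_exp_empFreq hA hn, sum_mul]
        simp only [mul_assoc]
    _ ≤ Real.exp (p * s + c) ^ n * Real.exp (-(n * (p * s + u))) := by gcongr
    _ = Real.exp (n * (c - u)) := by
        rw [← Real.exp_nat_mul, ← Real.exp_add]
        ring_nf

lemma iidPr_le_abs_empFreq_sub_le (hμ : ∀ x, 0 ≤ μ x) (hA : Pw μ A ≠ 0) (hn : n ≠ 0)
    {p s c : ℝ} (hp : cPw μ (univ.filter fun x => g x ∈ U) A = p) (hs : 0 ≤ s)
    (hmgf : ∀ r, |r| = s → 1 + p * (Real.exp r - 1) ≤ Real.exp (p * r + c)) (t : ℝ) :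
    iidPr μ A n (fun xs => t ≤ |empFreq U g xs - p|) ≤ 2 * Real.exp (n * (c - s * t)) := by
  have upper := iidPr_le_mul_empFreq_sub_le hμ hA hn hp (hmgf s (abs_of_nonneg hs)) (s * t)
  have lower := iidPr_le_mul_empFreq_sub_le hμ hA hn hp
    (hmgf (-s) (by rw [abs_neg, abs_of_nonneg hs])) (s * t)
  refine (iidPr_le_add_iidPr hμ fun xs h => ?_).trans ((add_le_add upper lower).trans_eq ?_)
  · rw [neg_mul_comm]
    exact (le_abs.1 h).imp (mul_le_mul_of_nonneg_left · hs) (mul_le_mul_of_nonneg_left · hs)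
  · ring

theorem iidPr_le_abs_empFreq_sub_le_hoeffding (hμ : ∀ x, 0 ≤ μ x) (hA : Pw μ A ≠ 0) (hn : n ≠ 0)
    {p t : ℝ} (hp : cPw μ (univ.filter fun x => g x ∈ U) A = p) (ht : 0 ≤ t) :
    iidPr μ A n (fun xs => t ≤ |empFreq U g xs - p|) ≤ 2 * Real.exp (-(2 * n * t ^ 2)) := by
  have hmgf (r : ℝ) (hr : |r| = 4 * t) :
      1 + p * (Real.exp r - 1) ≤ Real.exp (p * r + 2 * t ^ 2) := by
    convert bernoulli_mgf_le_exp_add_sq_div_eight (hp ▸ cPw_nonneg hμ) (hp ▸ cPw_le_one hμ) r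
      using 3
    rw [← sq_abs r, hr]
    ring
  convert iidPr_le_abs_empFreq_sub_le hμ hA hn hp (by positivity) hmgf t using 3
  ring

theorem iidPr_mul_le_abs_empFreq_sub_le_chernoff (hμ : ∀ x, 0 ≤ μ x) (hA : Pw μ A ≠ 0)
    (hn : n ≠ 0) {q ε : ℝ} (hq : cPw μ (univ.filter fun x => g x ∈ U) A = q) (hε0 : 0 ≤ ε)
    (hε2 : ε ≤ 2) :
    iidPr μ A n (fun xs => ε * q ≤ |empFreq U g xs - q|) ≤
      2 * Real.exp (-(n * q * ε ^ 2 / 4)) := by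
  have hmgf (r : ℝ) (hr : |r| = ε / 2) :
      1 + q * (Real.exp r - 1) ≤ Real.exp (q * r + q * (ε / 2) ^ 2) := by
    rw [← hr, sq_abs]
    exact bernoulli_mgf_le_exp_mul_add_sq (hq ▸ cPw_nonneg hμ) (by linarith)
  convert iidPr_le_abs_empFreq_sub_le hμ hA hn hq (by positivity) hmgf (ε * q) using 3
  ring

theorem samplePr_abs_ratio_sub_empRatio_gt_le (hμ : ∀ x, 0 ≤ μ x) (hA : Pw μ A ≠ 0)
    (hB : Pw μ B ≠ 0) (hnA : nA ≠ 0) (hnB : nB ≠ 0) (hq : 0 < cPw μ U B) {t ε δ : ℝ}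
    (ht : 0 ≤ t) (hε0 : 0 ≤ ε) (hε1 : ε < 1) (hδ : t + ε ≤ δ * ((1 - ε) * cPw μ U B)) :
    samplePr μ A B nA nB (fun xs zs =>
        |cPw μ (univ.filter fun x => g x ∈ U) A / cPw μ U B - empRatio U g xs zs| > δ) ≤
      2 * Real.exp (-(2 * nA * t ^ 2)) + 2 * Real.exp (-(nB * cPw μ U B * ε ^ 2 / 4)) := by
  have p_abs_le_one : |cPw μ (univ.filter fun x => g x ∈ U) A| ≤ 1 := by
    rw [abs_of_nonneg (cPw_nonneg hμ)]
    exact cPw_le_one hμ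
  have filter_id_mem : cPw μ (univ.filter fun x => id x ∈ U) B = cPw μ U B := by simp
  have deviation_p := iidPr_le_abs_empFreq_sub_le_hoeffding (g := g) (U := U) hμ hA hnA rfl ht
  have deviation_q :=
    iidPr_mul_le_abs_empFreq_sub_le_chernoff hμ hB hnB filter_id_mem hε0 (by linarith)
  refine (samplePr_le_iidPr_add_iidPr hμ hA hB fun xs zs => ?_).trans
    (add_le_add deviation_p deviation_q)
  contrapose!
  rintro ⟨hp', hq'⟩
  exact abs_div_sub_div_le p_abs_le_one hq hε1 hδ hp'.le hq'.le

end TailBounds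

theorem fixed_set_two_sided_concentration_general
    {μ : X → ℝ} {A B U : Finset X} {g : X → X} {qbar δ : ℝ} {nA nB : ℕ}
    (hμ : ∀ x, 0 ≤ μ x) (hA : Pw μ A ≠ 0) (hB : Pw μ B ≠ 0)
    (hqbar : 0 < qbar) (hq : qbar ≤ cPw μ U B) (hnA : 0 < nA) (hnB : 0 < nB)
    (hδ0 : 0 < δ) (hδ1 : δ * qbar ≤ 1) :
    samplePr μ A B nA nB (fun xs zs =>
        |cPw μ (univ.filter fun x => g x ∈ U) A / cPw μ U B - empRatio U g xs zs| > δ) ≤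
      4 * Real.exp (-(nA : ℝ) * δ ^ 2 *
        ((nB * qbar / nA) * qbar ^ 2 / (4 + Real.sqrt (nB * qbar / nA)) ^ 2)) := by
  set r := Real.sqrt (nB * qbar / nA)
  have r_nonneg : 0 ≤ r := Real.sqrt_nonneg _
  have r_sq : nB * qbar / nA = r ^ 2 := (Real.sq_sqrt (by positivity)).symm
  set t := δ * qbar * r / (4 + r) with ht
  set ε := 2 * δ * qbar / (4 + r) with hε
  have t_nonneg : 0 ≤ t := by positivity
  have ε_pos : 0 < ε := by positivity
  have budget : t + 2 * ε = δ * qbar := by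
    rw [ht, hε]
    field_simp
    ring
  have budget_le : t + ε ≤ δ * ((1 - ε) * cPw μ U B) :=
    calc t + ε ≤ δ * qbar - ε * (δ * qbar) := by
          linarith [mul_le_of_le_one_right ε_pos.le hδ1]
      _ = δ * ((1 - ε) * qbar) := by ring
      _ ≤ δ * ((1 - ε) * cPw μ U B) := by gcongr; linarith
  have exponent_p : nA * t ^ 2 = nA * δ ^ 2 * (r ^ 2 * qbar ^ 2 / (4 + r) ^ 2) := by
    rw [ht]
    field_simp
  have exponent_q : nB * qbar * ε ^ 2 / 4 = nA * δ ^ 2 * (r ^ 2 * qbar ^ 2 / (4 + r) ^ 2) := by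
    rw [← r_sq, hε]
    field_simp
    ring
  rw [r_sq, neg_mul, neg_mul]
  calc _ ≤ 2 * Real.exp (-(2 * nA * t ^ 2)) + 2 * Real.exp (-(nB * cPw μ U B * ε ^ 2 / 4)) :=
        samplePr_abs_ratio_sub_empRatio_gt_le hμ hA hB hnA.ne' hnB.ne' (hqbar.trans_le hq)
          t_nonneg ε_pos.le (by linarith) budget_le
    _ ≤ 2 * Real.exp (-(nA * t ^ 2)) + 2 * Real.exp (-(nB * qbar * ε ^ 2 / 4)) := by
        gcongr
        linarith [show 0 ≤ nA * t ^ 2 by positivity]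
    _ = 4 * Real.exp (-(nA * δ ^ 2 * (r ^ 2 * qbar ^ 2 / (4 + r) ^ 2))) := by
        rw [exponent_p, exponent_q]
        ring

/-- Corollary `cor:abs-concentration`: two-sided concentration of
the empirical expansion ratio for a fixed set. -/
theorem fixed_set_two_sided_concentration
    (μ : X → ℝ) (A B U : Finset X) (n : X → X) (qbar δ : ℝ) (nA nB : ℕ)
    (hμ : ∀ x, 0 ≤ μ x) (hμ1 : ∑ x, μ x = 1)
    (hA : 0 < Pw μ A) (hB : 0 < Pw μ B)
    (hn : ∀ x ∈ A, n x ∈ B)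
    (hqbar : 0 < qbar) (hq : qbar ≤ cPw μ U B)
    (hnA : 0 < nA) (hnB : 0 < nB)
    (hδ0 : 0 < δ) (hδ1 : δ ≤ 1) :
    samplePr μ A B nA nB (fun xs zs =>
        |cPw μ (univ.filter fun x => n x ∈ U) A / cPw μ U B -
          empRatio U n xs zs| > δ) ≤
      4 * Real.exp (-(nA : ℝ) * δ ^ 2 *
        ((nB * qbar / nA) * qbar ^ 2 / (4 + Real.sqrt (nB * qbar / nA)) ^ 2)) := by
  exact fixed_set_two_sided_concentration_general hμ hA.ne' hB.ne' hqbar hq hnA hnB hδ0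
    (mul_le_one₀ hδ1 hqbar.le (hq.trans (cPw_le_one hμ)))
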